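/- arXiv:2002.02876 — 5 statements merged into one kernel-verified Lean document; each statement's English description precedes it below -/
import Mathlib

section
/- For every nonempty, convex and compact set U ⊆ ℝ^K, A(U) = V(U): the set of returns with bounded conditional market risk coincides with the set of returns all of whose zero-padded prefixes remain in U (when the prefix is realizable in U). -/
open scoped BigOperators

/-- The length-`k` prefix of `w` belongs to the prefix set `U_{1:k}`
(only the first `k` coordinates of `w` are relevant). -/
def prefixMem {K : ℕ} (U : Set (Fin K → ℝ)) (k : ℕ) (w : ℕ → ℝ) : Prop :=
  ∃ r ∈ U, ∀ i : Fin K, (i : ℕ) < k → r i = w i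

/-- The one-step projection `U_{k+1}(w)` of `U` given the length-`k` prefix `w`. -/
def oneStep {K : ℕ} (U : Set (Fin K → ℝ)) (k : ℕ) (w : ℕ → ℝ) : Set ℝ :=
  {s | ∃ r ∈ U, (∀ i : Fin K, (i : ℕ) < k → r i = w i) ∧ ∀ h : k < K, r ⟨k, h⟩ = s}

/-- The game values `π^U_k(w)`, defined backward from `π^U_K = 0` by
`π^U_k(w) = inf_{ζ ∈ ℝ} sup_{s ∈ U_{k+1}(w)} (-ζ·s + π^U_{k+1}(w⌢s))`,
with values in the extended reals (the supremum over the empty set being `⊥`).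
Only the first `k` coordinates of `w` are relevant. -/
noncomputable def piVal {K : ℕ} (U : Set (Fin K → ℝ)) (k : ℕ) (w : ℕ → ℝ) : EReal :=
  if h : k < K then
    ⨅ ζ : ℝ, ⨆ s ∈ oneStep U k w,
      (((-ζ * s : ℝ) : EReal) + piVal U (k + 1) (Function.update w k s))
  else 0
  termination_by K - k
  decreasing_by omega

/-- A vector `r ∈ ℝ^K` seen as a prefix function `ℕ → ℝ` (padded with zeros). -/
def padR {K : ℕ} (r : Fin K → ℝ) : ℕ → ℝ := fun i => if h : i < K then r ⟨i, h⟩ else 0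

/-- `r_{1:k}⌢0_{K-k}`: the first `k` coordinates of `r` padded with zeros. -/
def zeroPad {K : ℕ} (r : Fin K → ℝ) (k : ℕ) : Fin K → ℝ :=
  fun i => if (i : ℕ) < k then r i else 0

/-- A length-`k` prefix `w : ℕ → ℝ` padded with zeros into a vector of `ℝ^K`. -/
def padPrefix (K : ℕ) (w : ℕ → ℝ) (k : ℕ) : Fin K → ℝ :=
  fun i => if (i : ℕ) < k then w i else 0

/-- `A(U)`: the set of returns with bounded conditional market risk. -/
def Aset {K : ℕ} (U : Set (Fin K → ℝ)) : Set (Fin K → ℝ) :=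
  {r | ∀ k : ℕ, k < K → ¬ prefixMem U k (padR r) ∨
    ((⊥ : EReal) < piVal U k (padR r) ∧ piVal U k (padR r) ≤ 0)}

/-- `V(U)`: the set of returns all of whose zero-padded prefixes remain in `U`
(whenever the prefix is realizable in `U`), together with `0 ∈ U`. -/
def Vset {K : ℕ} (U : Set (Fin K → ℝ)) : Set (Fin K → ℝ) :=
  {r | (0 : Fin K → ℝ) ∈ U ∧
    ∀ k : ℕ, 1 ≤ k → k ≤ K - 1 → zeroPad r k ∈ U ∨ ¬ prefixMem U k (padR r)}

/-!
On a realizable prefix `w` of length `k`, the game value is `0` if `w⌢0 ∈ U` and `-∞` otherwise.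
By backward induction, a next return `s` contributes `-ζ·s` to the inner supremum if `w⌢s⌢0 ∈ U`
and `-∞` otherwise, so only the slice `S` of such `s` matters. It is closed and convex, and it
contains `0` exactly when `w⌢0 ∈ U`. If `0 ∈ S`, the position `ζ = 0` is optimal and the value is
`0`. If `0 ∉ S`, then `S` is separated from `0`, and scaling the separating position drives the
value to `-∞`.
-/

open Function

section OneStepValue

/-- The value `inf_{ζ ∈ ℝ} sup_{s ∈ S} (-ζ·s)` of the one-period game with return set `S` and no
continuation value. -/
noncomputable def oneStepValue (S : Set ℝ) : EReal :=
  ⨅ ζ : ℝ, ⨆ s ∈ S, ((-ζ * s : ℝ) : EReal)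

variable {S : Set ℝ}

theorem oneStepValue_eq_zero (h0 : 0 ∈ S) : oneStepValue S = 0 := by
  apply le_antisymm
  · exact (iInf_le _ 0).trans (iSup₂_le fun s _ => by simp)
  · exact le_iInf fun ζ => le_iSup₂_of_le 0 h0 (by simp)

theorem exists_forall_one_le_mul_of_zero_notMem (hconv : Convex ℝ S) (hcl : IsClosed S)
    (h0 : 0 ∉ S) : ∃ c : ℝ, ∀ s ∈ S, 1 ≤ c * s := by
  obtain ⟨f, u, hu, hf⟩ := geometric_hahn_banach_point_closed hconv hcl h0
  rw [map_zero] at hu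
  refine ⟨f 1 / u, fun s hs => ?_⟩
  have hfs : f s = f 1 * s := by simpa [mul_comm] using f.map_smul s 1
  rw [div_mul_eq_mul_div, one_le_div hu, ← hfs]
  exact (hf s hs).le

theorem oneStepValue_eq_bot (hconv : Convex ℝ S) (hcl : IsClosed S) (h0 : 0 ∉ S) :
    oneStepValue S = ⊥ := by
  obtain ⟨c, hc⟩ := exists_forall_one_le_mul_of_zero_notMem hconv hcl h0
  rw [EReal.eq_bot_iff_forall_lt]
  intro y
  have hy : y - 1 < y := sub_one_lt y
  refine lt_of_le_of_lt (iInf_le_of_le (|y - 1| * c) (iSup₂_le fun s hs => ?_))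
    (EReal.coe_lt_coe_iff.2 hy)
  rw [EReal.coe_le_coe_iff]
  calc -(|y - 1| * c) * s = -(|y - 1| * (c * s)) := by ring
    _ ≤ -|y - 1| := neg_le_neg (le_mul_of_one_le_right (abs_nonneg _) (hc s hs))
    _ ≤ y - 1 := neg_abs_le _

open Classical in
theorem oneStepValue_eq_ite (hconv : Convex ℝ S) (hcl : IsClosed S) :
    oneStepValue S = if 0 ∈ S then 0 else ⊥ := by
  split_ifs with h0
  · exact oneStepValue_eq_zero h0
  · exact oneStepValue_eq_bot hconv hcl h0

end OneStepValue

open Classical in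
theorem biSup_add_ite_bot {α : Type*} {S T : Set α} (hTS : T ⊆ S) (f : α → EReal) :
    ⨆ s ∈ S, (f s + if s ∈ T then 0 else ⊥) = ⨆ s ∈ T, f s := by
  apply le_antisymm
  · refine iSup₂_le fun s _ => ?_
    split_ifs with hs
    · rw [add_zero]
      exact le_iSup₂ (f := fun s _ => f s) s hs
    · simp
  · exact iSup₂_le fun s hs => le_iSup₂_of_le s (hTS hs) (by simp [hs])

theorem convex_preimage_update {𝕜 ι : Type*} {E : ι → Type*} [Semiring 𝕜] [PartialOrder 𝕜]
    [∀ i, AddCommMonoid (E i)] [∀ i, Module 𝕜 (E i)] [DecidableEq ι] {U : Set (∀ i, E i)}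
    (hU : Convex 𝕜 U) (x : ∀ i, E i) (i : ι) : Convex 𝕜 (update x i ⁻¹' U) := by
  intro s hs t ht a b ha hb hab
  have hcombo : update x i (a • s + b • t) = a • update x i s + b • update x i t := by
    rw [← update_smul, ← update_smul, ← update_add, Convex.combo_self hab]
  rw [Set.mem_preimage, hcombo]
  exact hU hs ht ha hb hab

section Prefix

variable {K k : ℕ} {U : Set (Fin K → ℝ)} {w : ℕ → ℝ}

theorem padPrefix_update (hk : k < K) (w : ℕ → ℝ) (s : ℝ) :
    padPrefix K (update w k s) (k + 1) = update (padPrefix K w k) ⟨k, hk⟩ s := by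
  funext i
  simp only [padPrefix, update_apply, Fin.ext_iff]
  split_ifs <;> first | rfl | omega

theorem update_padPrefix_zero (hk : k < K) (w : ℕ → ℝ) :
    update (padPrefix K w k) ⟨k, hk⟩ 0 = padPrefix K w k := by
  simp [padPrefix]

theorem padPrefix_padR (r : Fin K → ℝ) (k : ℕ) : padPrefix K (padR r) k = zeroPad r k := by
  funext i
  simp [padPrefix, padR, zeroPad]

theorem zeroPad_zero (r : Fin K → ℝ) : zeroPad r 0 = 0 := by
  funext i
  simp [zeroPad]

theorem prefixMem_zero (hne : U.Nonempty) (w : ℕ → ℝ) : prefixMem U 0 w :=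
  hne.imp fun _ hr => ⟨hr, fun _ hi => absurd hi (Nat.not_lt_zero _)⟩

theorem padPrefix_mem_of_prefixMem (hw : prefixMem U K w) : padPrefix K w K ∈ U := by
  obtain ⟨r, hr, hrw⟩ := hw
  convert hr using 1
  funext i
  simp [padPrefix, hrw i i.isLt]

theorem prefixMem_update_of_mem_oneStep {s : ℝ} (hk : k < K) (hs : s ∈ oneStep U k w) :
    prefixMem U (k + 1) (update w k s) := by
  obtain ⟨r, hr, hrw, hrs⟩ := hs
  refine ⟨r, hr, fun i hi => ?_⟩
  obtain hik | hik := (Nat.lt_succ_iff.1 hi).lt_or_eq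
  · rw [update_of_ne hik.ne, hrw i hik]
  · rw [hik, update_self, ← hrs hk]
    exact congrArg r (Fin.ext hik)

theorem preimage_update_padPrefix_subset_oneStep (hk : k < K) :
    update (padPrefix K w k) ⟨k, hk⟩ ⁻¹' U ⊆ oneStep U k w := by
  refine fun s hs => ⟨_, hs, fun i hi => ?_, fun _ => update_self ..⟩
  rw [update_of_ne (Fin.ne_of_lt hi), padPrefix, if_pos hi]

end Prefix

section GameValue

variable {K k : ℕ} {U : Set (Fin K → ℝ)} {w : ℕ → ℝ}

open Classical in
theorem piVal_eq_oneStepValue (hk : k < K)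
    (hnext : ∀ s ∈ oneStep U k w, piVal U (k + 1) (update w k s) =
      if padPrefix K (update w k s) (k + 1) ∈ U then 0 else ⊥) :
    piVal U k w = oneStepValue (update (padPrefix K w k) ⟨k, hk⟩ ⁻¹' U) := by
  rw [piVal, dif_pos hk, oneStepValue]
  refine iInf_congr fun ζ => ?_
  rw [← biSup_add_ite_bot (preimage_update_padPrefix_subset_oneStep hk)]
  refine biSup_congr fun s hs => ?_
  rw [hnext s hs, padPrefix_update hk, Set.mem_preimage]

open Classical in
theorem piVal_eq_ite (hconv : Convex ℝ U) (hcl : IsClosed U) (hk : k ≤ K)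
    (hw : prefixMem U k w) : piVal U k w = if padPrefix K w k ∈ U then 0 else ⊥ := by
  induction hk using Nat.decreasingInduction generalizing w with
  | self => rw [piVal, dif_neg (lt_irrefl K), if_pos (padPrefix_mem_of_prefixMem hw)]
  | of_succ k hk ih =>
    have hslice_closed : IsClosed (update (padPrefix K w k) ⟨k, hk⟩ ⁻¹' U) :=
      hcl.preimage (continuous_const.update _ continuous_id)
    rw [piVal_eq_oneStepValue hk fun s hs => ih (prefixMem_update_of_mem_oneStep hk hs),
      oneStepValue_eq_ite (convex_preimage_update hconv _ _) hslice_closed, Set.mem_preimage,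
      update_padPrefix_zero]

theorem bot_lt_piVal_and_piVal_nonpos_iff (hconv : Convex ℝ U) (hcl : IsClosed U) (hk : k ≤ K)
    (hw : prefixMem U k w) : (⊥ < piVal U k w ∧ piVal U k w ≤ 0) ↔ padPrefix K w k ∈ U := by
  rw [piVal_eq_ite hconv hcl hk hw]
  split_ifs with h <;> simp [h]

end GameValue

section ReturnSets

variable {K : ℕ} {U : Set (Fin K → ℝ)} {r : Fin K → ℝ}

theorem mem_Aset_iff (hconv : Convex ℝ U) (hcl : IsClosed U) :
    r ∈ Aset U ↔ ∀ k < K, prefixMem U k (padR r) → zeroPad r k ∈ U := by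
  refine forall₂_congr fun k hk => ?_
  rw [← imp_iff_not_or]
  refine imp_congr_right fun hr => ?_
  rw [bot_lt_piVal_and_piVal_nonpos_iff hconv hcl hk.le hr, padPrefix_padR]

theorem zero_mem_of_forall_zeroPad_mem (hne : U.Nonempty)
    (h : ∀ k < K, prefixMem U k (padR r) → zeroPad r k ∈ U) : 0 ∈ U := by
  obtain rfl | hK := K.eq_zero_or_pos
  · exact hne.eq_univ ▸ Set.mem_univ 0
  · simpa only [zeroPad_zero] using h 0 hK (prefixMem_zero hne _)

theorem mem_Vset_iff (hne : U.Nonempty) :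
    r ∈ Vset U ↔ ∀ k < K, prefixMem U k (padR r) → zeroPad r k ∈ U := by
  constructor
  · rintro ⟨h0, hV⟩ k hk hr
    obtain rfl | hk0 := k.eq_zero_or_pos
    · rwa [zeroPad_zero]
    · exact (hV k hk0 (Nat.le_sub_one_of_lt hk)).resolve_right (not_not_intro hr)
  · intro h
    refine ⟨zero_mem_of_forall_zeroPad_mem hne h, fun k hk0 hk => ?_⟩
    rw [or_comm, ← imp_iff_not_or]
    exact h k (by omega)

end ReturnSets

theorem stmt_8_general {K : ℕ} (U : Set (Fin K → ℝ))
    (hne : U.Nonempty) (hconv : Convex ℝ U) (hcl : IsClosed U) :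
    Aset U = Vset U := by
  ext r
  rw [mem_Aset_iff hconv hcl, mem_Vset_iff hne]

/-- for every nonempty, convex and compact set `U ⊆ ℝ^K`, the set of
returns with bounded conditional market risk coincides with the set of returns all of
whose zero-padded prefixes remain in `U` (when the prefix is realizable in `U`). -/
theorem stmt_8 {K : ℕ} (U : Set (Fin K → ℝ))
    (hne : U.Nonempty) (hconv : Convex ℝ U) (hcomp : IsCompact U) :
    Aset U = Vset U :=
  stmt_8_general U hne hconv hcomp.isClosed
end

section
/- Let U ⊆ ℝ^K be nonempty, convex and compact. For every k ∈ {0,…,K−1} and every prefix w ∈ U_{1:k}: π^U_k(w) = 0 if w⌢0_{K−k} ∈ U, and π^U_k(w) = −∞ otherwise. (Moreover, for an arbitrary subset U ⊆ ℝ^K and any k and w ∈ ℝ^k, one always has π^U_k(w) ≤ 0.) -/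
open scoped BigOperators

/-!
Betting `ζ = 0` throughout shows that the value is at most `0`. If `w⌢0` lies in `U`, the opponent
can play `s = 0` forever, so no bet achieves less than `0`. If `w⌢0` does not lie in `U`, a
hyperplane strictly separates it from `U`. Every move `s` with `w⌢s⌢0 ∈ U` crosses this hyperplane,
so a large bet proportional to its slope along the next coordinate axis gains an arbitrarily large
amount on all those moves, while the remaining moves have continuation value `-∞` by backward
induction.
-/

theorem exists_le_mul_of_add_smul_mem {E : Type*} [AddCommGroup E] [Module ℝ E]
    [TopologicalSpace E] [IsTopologicalAddGroup E] [ContinuousSMul ℝ E] [LocallyConvexSpace ℝ E]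
    {C : Set E} (hconv : Convex ℝ C) (hclosed : IsClosed C) {p : E} (hp : p ∉ C) (e : E) (M : ℝ) :
    ∃ ζ : ℝ, ∀ s : ℝ, p + s • e ∈ C → M ≤ ζ * s := by
  obtain ⟨f, u, hpu, huC⟩ := geometric_hahn_banach_point_closed hconv hclosed hp
  have hgap : 0 < u - f p := sub_pos.2 hpu
  refine ⟨|M| * (f e / (u - f p)), fun s hs => ?_⟩
  have hslope : 1 ≤ f e / (u - f p) * s := by
    have hsep : u < f p + s * f e := by simpa using huC _ hs
    rw [div_mul_eq_mul_div, one_le_div hgap]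
    linarith
  calc M ≤ |M| * 1 := by simpa using le_abs_self M
    _ ≤ |M| * (f e / (u - f p) * s) := by gcongr
    _ = |M| * (f e / (u - f p)) * s := by ring

section GameValue

variable {K : ℕ} {U : Set (Fin K → ℝ)}

theorem padPrefix_update_succ {k : ℕ} (hk : k < K) (w : ℕ → ℝ) (s : ℝ) :
    padPrefix K (Function.update w k s) (k + 1)
      = padPrefix K w k + s • Pi.single ⟨k, hk⟩ 1 := by
  funext i
  simp only [padPrefix, Function.update_apply, Pi.add_apply, Pi.smul_apply, Pi.single_apply,
    Fin.ext_iff]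
  split_ifs <;> first | omega | simp

theorem padPrefix_update_zero_succ {k : ℕ} (hk : k < K) (w : ℕ → ℝ) :
    padPrefix K (Function.update w k 0) (k + 1) = padPrefix K w k := by
  rw [padPrefix_update_succ hk, zero_smul, add_zero]

theorem zero_mem_oneStep {k : ℕ} {w : ℕ → ℝ} (hw : padPrefix K w k ∈ U) :
    0 ∈ oneStep U k w :=
  ⟨padPrefix K w k, hw, fun _ hi => if_pos hi, fun _ => if_neg (lt_irrefl k)⟩

theorem padPrefix_update_mem_of_mem_oneStep {k : ℕ} {w : ℕ → ℝ} {s : ℝ} (hk : k + 1 = K)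
    (hs : s ∈ oneStep U k w) :
    padPrefix K (Function.update w k s) (k + 1) ∈ U := by
  obtain ⟨r, hr, hprefix, hlast⟩ := hs
  convert hr using 1
  funext i
  rcases (show (i : ℕ) ≤ k by omega).eq_or_lt with rfl | hi
  · simp [padPrefix, ← hlast i.isLt]
  · simp [padPrefix, hi.ne, hi.trans (Nat.lt_succ_self k), hprefix i hi]

theorem piVal_of_lt {k : ℕ} (hk : k < K) (U : Set (Fin K → ℝ)) (w : ℕ → ℝ) :
    piVal U k w = ⨅ ζ : ℝ, ⨆ s ∈ oneStep U k w,
      (((-ζ * s : ℝ) : EReal) + piVal U (k + 1) (Function.update w k s)) := by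
  rw [piVal, dif_pos hk]

theorem piVal_of_le {k : ℕ} (hk : K ≤ k) (U : Set (Fin K → ℝ)) (w : ℕ → ℝ) :
    piVal U k w = 0 := by
  rw [piVal, dif_neg hk.not_gt]

theorem piVal_nonpos (U : Set (Fin K → ℝ)) (k : ℕ) (w : ℕ → ℝ) : piVal U k w ≤ 0 := by
  rcases lt_or_ge k K with hk | hk
  · rw [piVal_of_lt hk]
    refine iInf_le_of_le 0 (iSup₂_le fun s _ => ?_)
    simpa using piVal_nonpos U (k + 1) (Function.update w k s)
  · exact (piVal_of_le hk U w).le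
termination_by K - k

theorem piVal_eq_zero_of_padPrefix_mem {k : ℕ} {w : ℕ → ℝ} (hw : padPrefix K w k ∈ U) :
    piVal U k w = 0 := by
  rcases lt_or_ge k K with hk | hk
  · refine le_antisymm (piVal_nonpos U k w) ?_
    rw [piVal_of_lt hk]
    refine le_iInf fun ζ => le_iSup₂_of_le 0 (zero_mem_oneStep hw) ?_
    have hnext : piVal U (k + 1) (Function.update w k 0) = 0 :=
      piVal_eq_zero_of_padPrefix_mem (by rwa [padPrefix_update_zero_succ hk])
    simp [hnext]
  · exact piVal_of_le hk U w
termination_by K - k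

theorem piVal_eq_bot_of_padPrefix_notMem (hconv : Convex ℝ U) (hclosed : IsClosed U)
    {k : ℕ} {w : ℕ → ℝ} (hk : k < K) (hw : padPrefix K w k ∉ U) :
    piVal U k w = ⊥ := by
  rw [EReal.eq_bot_iff_forall_lt]
  intro y
  obtain ⟨ζ, hζ⟩ :=
    exists_le_mul_of_add_smul_mem hconv hclosed hw (Pi.single ⟨k, hk⟩ 1) (1 - y)
  suffices hbet : piVal U k w ≤ ((y - 1 : ℝ) : EReal) from
    hbet.trans_lt (EReal.coe_lt_coe (sub_one_lt y))
  rw [piVal_of_lt hk]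
  refine iInf_le_of_le ζ (iSup₂_le fun s hs => ?_)
  by_cases hsU : padPrefix K (Function.update w k s) (k + 1) ∈ U
  · have hgain : 1 - y ≤ ζ * s := hζ s (padPrefix_update_succ hk w s ▸ hsU)
    rw [piVal_eq_zero_of_padPrefix_mem hsU, add_zero, EReal.coe_le_coe_iff]
    linarith
  · have hk' : k + 1 < K :=
      lt_of_le_of_ne hk fun hlast => hsU (padPrefix_update_mem_of_mem_oneStep hlast hs)
    rw [piVal_eq_bot_of_padPrefix_notMem hconv hclosed hk' hsU, EReal.add_bot]
    exact bot_le
termination_by K - k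

end GameValue

theorem stmt_9_general (K : ℕ) :
    (∀ (U : Set (Fin K → ℝ)) (k : ℕ) (w : ℕ → ℝ), padPrefix K w k ∈ U → piVal U k w = 0) ∧
    (∀ U : Set (Fin K → ℝ), Convex ℝ U → IsClosed U →
      ∀ k : ℕ, k < K → ∀ w : ℕ → ℝ, padPrefix K w k ∉ U → piVal U k w = ⊥) ∧
    (∀ (U : Set (Fin K → ℝ)) (k : ℕ) (w : ℕ → ℝ), piVal U k w ≤ 0) :=
  ⟨fun _ _ _ => piVal_eq_zero_of_padPrefix_mem,
    fun _ hconv hclosed _ hk _ => piVal_eq_bot_of_padPrefix_notMem hconv hclosed hk,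
    piVal_nonpos⟩

/-- for a nonempty, convex and compact `U ⊆ ℝ^K` and any realizable prefix
`w ∈ U_{1:k}` (`k < K`), the game value `π^U_k(w)` is `0` if the zero-padded prefix
`w⌢0_{K-k}` lies in `U`, and `-∞` otherwise; moreover, for an arbitrary subset
`U ⊆ ℝ^K`, one always has `π^U_k(w) ≤ 0`. -/
theorem stmt_9 (K : ℕ) :
    (∀ U : Set (Fin K → ℝ), U.Nonempty → Convex ℝ U → IsCompact U →
      ∀ k : ℕ, k < K → ∀ w : ℕ → ℝ, prefixMem U k w →
        (padPrefix K w k ∈ U → piVal U k w = 0) ∧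
        (padPrefix K w k ∉ U → piVal U k w = ⊥)) ∧
    (∀ U : Set (Fin K → ℝ), ∀ k : ℕ, ∀ w : ℕ → ℝ, piVal U k w ≤ 0) := by
  obtain ⟨hzero, hbot, hnonpos⟩ := stmt_9_general K
  exact ⟨fun U _ hconv hcompact k hk w _ =>
    ⟨hzero U k w, hbot U hconv hcompact.isClosed k hk w⟩, hnonpos⟩
end

section
/- For every subset U ⊆ ℝ^K, U ∩ V(U) ⊆ V(U ∩ V(U)). -/
open scoped BigOperators

/-!
A vector `r` lies in `U ∩ V(U)` exactly when every truncation `r_{1:k}⌢0_{K-k}`, `0 ≤ k ≤ K`, lies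
in `U`: the prefixes of `r` are realized in `U` by `r` itself, and the extreme truncations are
`0` and `r`. A truncation of a truncation of `r` is again a truncation of `r`, so `U ∩ V(U)` is
stable under truncation.
-/

section Truncation

variable {K : ℕ} (r : Fin K → ℝ)

theorem zeroPad_zero_right : zeroPad r 0 = 0 := by
  funext i
  simp [zeroPad]

theorem zeroPad_of_le {k : ℕ} (hk : K ≤ k) : zeroPad r k = r :=
  funext fun i => if_pos (i.isLt.trans_le hk)

theorem zeroPad_zeroPad (k j : ℕ) : zeroPad (zeroPad r k) j = zeroPad r (min j k) := by
  funext i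
  simp only [zeroPad, lt_min_iff, ite_and]

end Truncation

section PrefixStability

variable {K : ℕ} {U : Set (Fin K → ℝ)} {r : Fin K → ℝ}

theorem prefixMem_padR_of_mem (hr : r ∈ U) (k : ℕ) : prefixMem U k (padR r) :=
  ⟨r, hr, fun i _ => by simp [padR]⟩

theorem mem_inter_Vset_iff : r ∈ U ∩ Vset U ↔ ∀ k, zeroPad r k ∈ U := by
  constructor
  · rintro ⟨hrU, zero_mem, hrV⟩ k
    rcases k.eq_zero_or_pos with rfl | hk
    · rwa [zeroPad_zero_right]
    rcases le_or_gt K k with hKk | hkK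
    · rwa [zeroPad_of_le r hKk]
    · exact (hrV k hk (Nat.le_sub_one_of_lt hkK)).resolve_right
        (not_not_intro (prefixMem_padR_of_mem hrU k))
  · intro h
    have zero_mem : (0 : Fin K → ℝ) ∈ U := zeroPad_zero_right r ▸ h 0
    have hrU : r ∈ U := zeroPad_of_le r le_rfl ▸ h K
    exact ⟨hrU, zero_mem, fun k _ _ => Or.inl (h k)⟩

theorem zeroPad_mem_inter_Vset (hr : r ∈ U ∩ Vset U) (k : ℕ) : zeroPad r k ∈ U ∩ Vset U := by
  refine mem_inter_Vset_iff.2 fun j => ?_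
  rw [zeroPad_zeroPad]
  exact mem_inter_Vset_iff.1 hr (min j k)

end PrefixStability

/-- for every subset `U ⊆ ℝ^K`, `U ∩ V(U) ⊆ V(U ∩ V(U))`. -/
theorem stmt_11 {K : ℕ} (U : Set (Fin K → ℝ)) :
    U ∩ Vset U ⊆ Vset (U ∩ Vset U) :=
  fun _ hr => (mem_inter_Vset_iff.2 (zeroPad_mem_inter_Vset hr)).2
end

section
/- For every p_0 ∈ ℝ, the buyer's minimal worst-case risk equals ϱ^b(p_0) = p_0 − (S_0 − Kstr)⁺; the infimum over ξ is attained at ξ = 0 when S_0 < Kstr, and at ξ = −1 when S_0 ≥ Kstr. -/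
/-!
At `S₁ = S₀` the hedge contributes nothing, so every position leaves the buyer a worst-case risk of
at least `p₀ - f S₀`, where `f` is the payoff. If `c` is a subgradient of `f` at `S₀`, the position
`-c` makes `S₀` itself the worst scenario, so `(-c, S₀)` is a saddle point of the buyer's loss. The
call payoff has the subgradient `0` at `S₀ ≤ Kstr` and `1` at `S₀ ≥ Kstr`.
-/

open Set Bornology

section SaddlePoint

variable {E F β : Type*} [ConditionallyCompleteLattice β] {X : Set E} {Y : Set F} {f : E → F → β}
  {a : E} {b : F}

theorem sSup_image_eq_of_isSaddlePointOn (h : IsSaddlePointOn X Y f a b) (ha : a ∈ X)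
    (hb : b ∈ Y) : sSup (f a '' Y) = f a b :=
  IsGreatest.csSup_eq ⟨mem_image_of_mem _ hb, forall_mem_image.2 (h a ha)⟩

theorem sInf_image_sSup_image_eq_of_isSaddlePointOn (h : IsSaddlePointOn X Y f a b) (ha : a ∈ X)
    (hb : b ∈ Y) (hbdd : ∀ x ∈ X, BddAbove (f x '' Y)) :
    sInf ((fun x => sSup (f x '' Y)) '' X) = f a b := by
  refine IsLeast.csInf_eq ⟨⟨a, ha, sSup_image_eq_of_isSaddlePointOn h ha hb⟩, ?_⟩
  refine forall_mem_image.2 fun x hx => ?_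
  calc f a b ≤ f x b := h x hx b hb
    _ ≤ sSup (f x '' Y) := le_csSup (hbdd x hx) (mem_image_of_mem _ hb)

end SaddlePoint

/-- `c` is a subgradient of `f` at `x₀` relative to `s`: the line of slope `c` through
`(x₀, f x₀)` lies below the graph of `f` over `s`. The buyer's optimal hedges are the negatives
of such slopes. -/
def IsSubgradientOn (f : ℝ → ℝ) (s : Set ℝ) (x₀ c : ℝ) : Prop :=
  ∀ x ∈ s, f x₀ + c * (x - x₀) ≤ f x

/-- Loss in scenario `x` of a buyer who pays `p` for the payoff `f` and holds `ξ` shares of the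
stock, bought at `x₀`, at zero interest rate. -/
def buyerLoss (f : ℝ → ℝ) (x₀ p ξ x : ℝ) : ℝ :=
  -f x + p - ξ * (x - x₀)

section BuyerLoss

variable {f : ℝ → ℝ} {s : Set ℝ} {x₀ c : ℝ}

theorem buyerLoss_self (f : ℝ → ℝ) (x₀ p ξ : ℝ) : buyerLoss f x₀ p ξ x₀ = p - f x₀ := by
  unfold buyerLoss
  ring

theorem buyerLoss_le_of_isSubgradientOn (h : IsSubgradientOn f s x₀ c) (p ξ : ℝ) {x : ℝ}
    (hx : x ∈ s) : buyerLoss f x₀ p ξ x ≤ p - f x₀ - (c + ξ) * (x - x₀) := by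
  unfold buyerLoss
  linarith [h x hx]

theorem isSaddlePointOn_buyerLoss (h : IsSubgradientOn f s x₀ c) (p : ℝ) :
    IsSaddlePointOn univ s (buyerLoss f x₀ p) (-c) x₀ := by
  intro ξ _ x hx
  calc buyerLoss f x₀ p (-c) x ≤ p - f x₀ - (c + -c) * (x - x₀) :=
        buyerLoss_le_of_isSubgradientOn h p (-c) hx
    _ = buyerLoss f x₀ p ξ x₀ := by rw [buyerLoss_self]; ring

theorem bddAbove_image_buyerLoss (h : IsSubgradientOn f s x₀ c) (hs : IsBounded s) (p ξ : ℝ) :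
    BddAbove (buyerLoss f x₀ p ξ '' s) := by
  obtain ⟨r, hr⟩ := hs.subset_closedBall x₀
  refine ⟨p - f x₀ + |c + ξ| * r, forall_mem_image.2 fun x hx => ?_⟩
  have hdist : |x - x₀| ≤ r := hr hx
  calc buyerLoss f x₀ p ξ x ≤ p - f x₀ - (c + ξ) * (x - x₀) :=
        buyerLoss_le_of_isSubgradientOn h p ξ hx
    _ ≤ p - f x₀ + |c + ξ| * |x - x₀| := by
        rw [← abs_mul]
        linarith [neg_abs_le ((c + ξ) * (x - x₀))]
    _ ≤ p - f x₀ + |c + ξ| * r := by gcongr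

theorem sSup_image_buyerLoss_neg (h : IsSubgradientOn f s x₀ c) (hx₀ : x₀ ∈ s) (p : ℝ) :
    sSup (buyerLoss f x₀ p (-c) '' s) = p - f x₀ := by
  rw [sSup_image_eq_of_isSaddlePointOn (isSaddlePointOn_buyerLoss h p) (mem_univ _) hx₀,
    buyerLoss_self]

theorem sInf_range_sSup_image_buyerLoss (h : IsSubgradientOn f s x₀ c) (hs : IsBounded s)
    (hx₀ : x₀ ∈ s) (p : ℝ) :
    sInf (range fun ξ => sSup (buyerLoss f x₀ p ξ '' s)) = p - f x₀ := by
  rw [← image_univ, sInf_image_sSup_image_eq_of_isSaddlePointOn (isSaddlePointOn_buyerLoss h p)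
    (mem_univ _) hx₀ fun ξ _ => bddAbove_image_buyerLoss h hs p ξ, buyerLoss_self]

end BuyerLoss

/-- Payoff at maturity of a European call with strike `K`. -/
def callPayoff (K x : ℝ) : ℝ :=
  max (x - K) 0

section CallPayoff

variable {K x₀ : ℝ}

theorem isSubgradientOn_callPayoff_zero (s : Set ℝ) (h : x₀ ≤ K) :
    IsSubgradientOn (callPayoff K) s x₀ 0 := by
  intro x _
  calc callPayoff K x₀ + 0 * (x - x₀) = 0 := by
        rw [callPayoff, max_eq_right (sub_nonpos.2 h), zero_mul, add_zero]
    _ ≤ callPayoff K x := le_max_right _ _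

theorem isSubgradientOn_callPayoff_one (s : Set ℝ) (h : K ≤ x₀) :
    IsSubgradientOn (callPayoff K) s x₀ 1 := by
  intro x _
  calc callPayoff K x₀ + 1 * (x - x₀) = x - K := by
        rw [callPayoff, max_eq_left (sub_nonneg.2 h)]; ring
    _ ≤ callPayoff K x := le_max_left _ _

theorem exists_isSubgradientOn_callPayoff (K : ℝ) (s : Set ℝ) (x₀ : ℝ) :
    ∃ c, IsSubgradientOn (callPayoff K) s x₀ c :=
  (le_total x₀ K).elim (fun h => ⟨0, isSubgradientOn_callPayoff_zero s h⟩)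
    fun h => ⟨1, isSubgradientOn_callPayoff_one s h⟩

end CallPayoff

theorem stmt_16_general {s : Set ℝ} (hs : IsBounded s) {S0 : ℝ} (hS0 : S0 ∈ s) (Kstr p0 : ℝ) :
    sInf (range fun ξ : ℝ =>
        sSup ((fun S1 : ℝ => -(max (S1 - Kstr) 0) + p0 - ξ * (S1 - S0)) '' s))
      = p0 - max (S0 - Kstr) 0 ∧
    (S0 ≤ Kstr →
      sSup ((fun S1 : ℝ => -(max (S1 - Kstr) 0) + p0 - 0 * (S1 - S0)) '' s)
        = p0 - max (S0 - Kstr) 0) ∧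
    (Kstr ≤ S0 →
      sSup ((fun S1 : ℝ => -(max (S1 - Kstr) 0) + p0 - (-1) * (S1 - S0)) '' s)
        = p0 - max (S0 - Kstr) 0) := by
  obtain ⟨c, hc⟩ := exists_isSubgradientOn_callPayoff Kstr s S0
  refine ⟨sInf_range_sSup_image_buyerLoss hc hs hS0 p0, fun h => ?_, fun h => ?_⟩
  · have hzero := sSup_image_buyerLoss_neg (isSubgradientOn_callPayoff_zero s h) hS0 p0
    rwa [neg_zero] at hzero
  · exact sSup_image_buyerLoss_neg (isSubgradientOn_callPayoff_one s h) hS0 p0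

/-- in the one-period worst-case model, the buyer's minimal worst-case
risk is `ϱ^b(p₀) = p₀ - (S₀ - Kstr)⁺`; the infimum over the hedging position `ξ` is
attained at `ξ = 0` when `S₀ < Kstr` and at `ξ = -1` when `S₀ ≥ Kstr`. -/
theorem stmt_16 (l u S0 Kstr : ℝ) (hlu : l < u)
    (hS0l : l ≤ S0) (hS0u : S0 ≤ u) (hKl : l ≤ Kstr) (hKu : Kstr ≤ u) :
    ∀ p0 : ℝ,
      sInf (Set.range fun ξ : ℝ =>
          sSup ((fun S1 : ℝ => -(max (S1 - Kstr) 0) + p0 - ξ * (S1 - S0)) '' Set.Icc l u))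
        = p0 - max (S0 - Kstr) 0 ∧
      (S0 < Kstr →
        sSup ((fun S1 : ℝ => -(max (S1 - Kstr) 0) + p0 - 0 * (S1 - S0)) '' Set.Icc l u)
          = p0 - max (S0 - Kstr) 0) ∧
      (Kstr ≤ S0 →
        sSup ((fun S1 : ℝ => -(max (S1 - Kstr) 0) + p0 - (-1) * (S1 - S0)) '' Set.Icc l u)
          = p0 - max (S0 - Kstr) 0) := by
  intro p0
  exact (stmt_16_general (Metric.isBounded_Icc l u) ⟨hS0l, hS0u⟩ Kstr p0).imp_right
    (And.imp_left fun hzero hlt => hzero hlt.le)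
end

section
/- The price p_0* := (1/2)(S_0 − l)(u − Kstr)/(u − l) + (1/2)(S_0 − Kstr)⁺ is the unique real number at which ϱ^w(p_0*) = ϱ^b(p_0*) (the one-period equal risk price), and the common value of the two minimal risks at p_0* equals (1/2)(S_0 − l)(u − Kstr)/(u − l) − (1/2)(S_0 − Kstr)⁺. -/
/-!
The minimal risk of a liability `g` hedged linearly in the stock is its concave envelope at `S₀`.
If `S₀ = a x + b y` is a convex combination of possible prices, the hedge has mean zero under these
weights, so `a g(x) + b g(y)` bounds every worst case from below; conversely the slope of an affine
majorant of `g` is a hedge, and the majorant's value at `S₀` bounds the minimal risk from above.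
For a convex payoff `f` on `[l, u]` the writer faces `f - p`, whose envelope is the chord minus `p`,
and the buyer faces the concave liability `p - f`, which is its own envelope. Both risks are affine
in `p`, and they agree exactly at the average of the chord and of `f` at `S₀`.
-/

open Set

/-- The minimal worst-case risk of the liability `g` over the set `s` of terminal stock prices, when
`ξ` shares bought at the price `S₀` may be held against it. The infimum and suprema are those of
real numbers, with junk value `0` on unbounded sets. -/
noncomputable def minimalRisk (s : Set ℝ) (S₀ : ℝ) (g : ℝ → ℝ) : ℝ :=
  sInf (range fun ξ : ℝ => sSup ((fun S : ℝ => g S - ξ * (S - S₀)) '' s))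

/-- The minimal risk `ϱ^w(p)` of an agent who sells the payoff `f` at the price `p`. -/
noncomputable def writerRisk (s : Set ℝ) (S₀ : ℝ) (f : ℝ → ℝ) (p : ℝ) : ℝ :=
  minimalRisk s S₀ fun S => f S - p

/-- The minimal risk `ϱ^b(p)` of an agent who buys the payoff `f` at the price `p`. -/
noncomputable def buyerRisk (s : Set ℝ) (S₀ : ℝ) (f : ℝ → ℝ) (p : ℝ) : ℝ :=
  minimalRisk s S₀ fun S => -f S + p

section MinimalRisk

variable {s : Set ℝ} {S₀ V ξ : ℝ} {g : ℝ → ℝ}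

theorem bddAbove_image_of_le_affine (hs : Bornology.IsBounded s)
    (hg : ∀ S ∈ s, g S ≤ V + ξ * (S - S₀)) : BddAbove (g '' s) := by
  obtain ⟨R, hR⟩ := hs.exists_norm_le
  refine ⟨V + |ξ| * (R + |S₀|), forall_mem_image.2 fun S hS => (hg S hS).trans ?_⟩
  have hS₀ : |S - S₀| ≤ R + |S₀| := (abs_sub S S₀).trans (by gcongr; exact hR S hS)
  calc V + ξ * (S - S₀) ≤ V + |ξ| * |S - S₀| := by
        rw [← abs_mul]; gcongr; exact le_abs_self _
    _ ≤ V + |ξ| * (R + |S₀|) := by gcongr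

theorem bddAbove_image_sub_hedge (hs : Bornology.IsBounded s) (hg : BddAbove (g '' s)) (S₀ ξ : ℝ) :
    BddAbove ((fun S => g S - ξ * (S - S₀)) '' s) := by
  obtain ⟨M, hM⟩ := hg
  refine bddAbove_image_of_le_affine (V := M) (ξ := -ξ) (S₀ := S₀) hs fun S hS => ?_
  linarith [hM (mem_image_of_mem g hS)]

theorem convexComb_le_sSup_sub_hedge (hs : Bornology.IsBounded s) (hg : BddAbove (g '' s))
    {x y a b : ℝ} (hx : x ∈ s) (hy : y ∈ s) (ha : 0 ≤ a) (hb : 0 ≤ b) (hab : a + b = 1)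
    (hS₀ : a * x + b * y = S₀) (ξ : ℝ) :
    a * g x + b * g y ≤ sSup ((fun S => g S - ξ * (S - S₀)) '' s) := by
  set M := sSup ((fun S => g S - ξ * (S - S₀)) '' s)
  have le_M : ∀ S ∈ s, g S - ξ * (S - S₀) ≤ M := fun S hS =>
    le_csSup (bddAbove_image_sub_hedge hs hg S₀ ξ) (mem_image_of_mem _ hS)
  calc a * g x + b * g y
      = a * (g x - ξ * (x - S₀)) + b * (g y - ξ * (y - S₀)) := by
        linear_combination ξ * hS₀ - ξ * S₀ * hab
    _ ≤ a * M + b * M := by gcongr; exacts [le_M x hx, le_M y hy]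
    _ = M := by rw [← add_mul, hab, one_mul]

theorem convexComb_le_minimalRisk (hs : Bornology.IsBounded s) (hg : BddAbove (g '' s))
    {x y a b : ℝ} (hx : x ∈ s) (hy : y ∈ s) (ha : 0 ≤ a) (hb : 0 ≤ b) (hab : a + b = 1)
    (hS₀ : a * x + b * y = S₀) : a * g x + b * g y ≤ minimalRisk s S₀ g :=
  le_csInf (range_nonempty _) <|
    forall_mem_range.2 <| convexComb_le_sSup_sub_hedge hs hg hx hy ha hb hab hS₀

theorem apply_le_sSup_sub_hedge (hs : Bornology.IsBounded s) (hg : BddAbove (g '' s))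
    (hS₀ : S₀ ∈ s) (ξ : ℝ) : g S₀ ≤ sSup ((fun S => g S - ξ * (S - S₀)) '' s) :=
  le_csSup_of_le (bddAbove_image_sub_hedge hs hg S₀ ξ) (mem_image_of_mem _ hS₀) (by simp)

theorem apply_le_minimalRisk (hs : Bornology.IsBounded s) (hg : BddAbove (g '' s)) (hS₀ : S₀ ∈ s) :
    g S₀ ≤ minimalRisk s S₀ g :=
  le_csInf (range_nonempty _) <| forall_mem_range.2 <| apply_le_sSup_sub_hedge hs hg hS₀

theorem minimalRisk_le_of_le_affine (hs : Bornology.IsBounded s) (hS₀ : S₀ ∈ s)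
    (hg : ∀ S ∈ s, g S ≤ V + ξ * (S - S₀)) : minimalRisk s S₀ g ≤ V := by
  have bddBelow_risks :
      BddBelow (range fun ξ : ℝ => sSup ((fun S => g S - ξ * (S - S₀)) '' s)) :=
    ⟨g S₀, forall_mem_range.2 <|
      apply_le_sSup_sub_hedge hs (bddAbove_image_of_le_affine hs hg) hS₀⟩
  refine csInf_le_of_le bddBelow_risks (mem_range_self ξ) ?_
  exact csSup_le ⟨_, mem_image_of_mem _ hS₀⟩ <|
    forall_mem_image.2 fun S hS => sub_le_iff_le_add.2 (hg S hS)

theorem minimalRisk_eq_apply_of_concaveOn (hs : Bornology.IsBounded s) (hsc : IsClosed s)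
    (hS₀ : S₀ ∈ s) (hg : ConcaveOn ℝ s g) (hgc : UpperSemicontinuousOn g s) :
    minimalRisk s S₀ g = g S₀ := by
  have exists_affine_majorant :
      ∀ V, g S₀ < V → ∃ ξ, ∀ S ∈ s, g S ≤ V + ξ * (S - S₀) := fun V hV => by
    obtain ⟨c, d, hcd, hV'⟩ :=
      hg.neg.exists_affine_le_of_lt_real (f := -g) hS₀ (neg_lt_neg hV) hsc hgc.neg
    exact ⟨-c, fun S hS => by linarith [hcd S hS, Pi.neg_apply g S]⟩
  refine le_antisymm (le_of_forall_gt_imp_ge_of_dense fun V hV => ?_) ?_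
  · obtain ⟨ξ, hξ⟩ := exists_affine_majorant V hV
    exact minimalRisk_le_of_le_affine hs hS₀ hξ
  · obtain ⟨ξ, hξ⟩ := exists_affine_majorant (g S₀ + 1) (lt_add_one _)
    exact apply_le_minimalRisk hs (bddAbove_image_of_le_affine hs hξ) hS₀

end MinimalRisk

section Convex

variable {l u S₀ : ℝ} {f : ℝ → ℝ}

theorem add_slope_mul_convexComb_sub (f : ℝ → ℝ) (l u : ℝ) {a b : ℝ} (hab : a + b = 1) :
    f l + slope f l u * (a * l + b * u - l) = a * f l + b * f u := by
  have hslope : (u - l) * slope f l u = f u - f l := sub_smul_slope f l u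
  linear_combination b * hslope + (slope f l u * l - f l) * hab

theorem le_chord_of_convexOn (hf : ConvexOn ℝ (Icc l u) f) {x : ℝ} (hx : x ∈ Icc l u) :
    f x ≤ f l + slope f l u * (x - l) := by
  have hlu : l ≤ u := hx.1.trans hx.2
  obtain ⟨a, b, ha, hb, hab, rfl⟩ := Icc_subset_segment hx
  rw [smul_eq_mul, smul_eq_mul, add_slope_mul_convexComb_sub f l u hab]
  exact hf.2 (left_mem_Icc.2 hlu) (right_mem_Icc.2 hlu) ha hb hab

theorem minimalRisk_Icc_eq_chord_of_convexOn (hS₀ : S₀ ∈ Icc l u) (hf : ConvexOn ℝ (Icc l u) f) :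
    minimalRisk (Icc l u) S₀ f = f l + slope f l u * (S₀ - l) := by
  have hlu : l ≤ u := hS₀.1.trans hS₀.2
  have hs : Bornology.IsBounded (Icc l u) := Metric.isBounded_Icc l u
  have le_chord : ∀ S ∈ Icc l u,
      f S ≤ (f l + slope f l u * (S₀ - l)) + slope f l u * (S - S₀) := fun S hS => by
    linarith [le_chord_of_convexOn hf hS]
  refine le_antisymm (minimalRisk_le_of_le_affine hs hS₀ le_chord) ?_
  obtain ⟨a, b, ha, hb, hab, hcomb⟩ := Icc_subset_segment hS₀
  calc f l + slope f l u * (S₀ - l)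
      = a * f l + b * f u := by
        rw [← hcomb, smul_eq_mul, smul_eq_mul, add_slope_mul_convexComb_sub f l u hab]
    _ ≤ minimalRisk (Icc l u) S₀ f :=
        convexComb_le_minimalRisk hs (bddAbove_image_of_le_affine hs le_chord)
          (left_mem_Icc.2 hlu) (right_mem_Icc.2 hlu) ha hb hab hcomb

theorem writerRisk_Icc_of_convexOn (hS₀ : S₀ ∈ Icc l u) (hf : ConvexOn ℝ (Icc l u) f) (p : ℝ) :
    writerRisk (Icc l u) S₀ f p = f l + slope f l u * (S₀ - l) - p := by
  have hconvex : ConvexOn ℝ (Icc l u) fun S => f S - p :=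
    hf.sub (concaveOn_const p (convex_Icc l u))
  rw [writerRisk, minimalRisk_Icc_eq_chord_of_convexOn hS₀ hconvex]
  simp only [slope_def_field]
  ring

theorem buyerRisk_of_convexOn {s : Set ℝ} (hs : Bornology.IsBounded s) (hsc : IsClosed s)
    (hS₀ : S₀ ∈ s) (hf : ConvexOn ℝ s f) (hfc : LowerSemicontinuousOn f s) (p : ℝ) :
    buyerRisk s S₀ f p = p - f S₀ := by
  have hconcave : ConcaveOn ℝ s fun S => -f S + p := hf.neg.add_const p
  have husc : UpperSemicontinuousOn (fun S => -f S + p) s :=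
    hfc.neg.add upperSemicontinuousOn_const
  rw [buyerRisk, minimalRisk_eq_apply_of_concaveOn hs hsc hS₀ hconcave husc]
  ring

theorem stmt_17_general (hS₀ : S₀ ∈ Icc l u) (hf : ConvexOn ℝ (Icc l u) f)
    (hfc : LowerSemicontinuousOn f (Icc l u)) :
    (∀ p, writerRisk (Icc l u) S₀ f p = buyerRisk (Icc l u) S₀ f p ↔
      p = (1 / 2) * (f l + slope f l u * (S₀ - l)) + (1 / 2) * f S₀) ∧
    writerRisk (Icc l u) S₀ f ((1 / 2) * (f l + slope f l u * (S₀ - l)) + (1 / 2) * f S₀)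
      = (1 / 2) * (f l + slope f l u * (S₀ - l)) - (1 / 2) * f S₀ := by
  simp only [writerRisk_Icc_of_convexOn hS₀ hf,
    buyerRisk_of_convexOn (Metric.isBounded_Icc l u) isClosed_Icc hS₀ hf hfc]
  refine ⟨fun p => ⟨fun h => ?_, fun h => ?_⟩, ?_⟩ <;> linarith

end Convex

theorem convexOn_callPayoff (K : ℝ) {s : Set ℝ} (hs : Convex ℝ s) :
    ConvexOn ℝ s fun S => max (S - K) 0 :=
  ((convexOn_id hs).sub (concaveOn_const K hs)).sup (convexOn_const 0 hs)

theorem chord_callPayoff {l u K : ℝ} (hl : l ≤ K) (hu : K ≤ u) (x : ℝ) :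
    max (l - K) 0 + slope (fun S => max (S - K) 0) l u * (x - l)
      = (x - l) * (u - K) / (u - l) := by
  rw [slope_def_field, max_eq_right (sub_nonpos.2 hl), max_eq_left (sub_nonneg.2 hu)]
  ring

/-- in the one-period worst-case model, the price
`p₀* = (1/2)(S₀ - l)(u - Kstr)/(u - l) + (1/2)(S₀ - Kstr)⁺` is the unique price at which
the writer's and buyer's minimal worst-case risks coincide (the equal risk price), and
the common minimal risk at `p₀*` equals
`(1/2)(S₀ - l)(u - Kstr)/(u - l) - (1/2)(S₀ - Kstr)⁺`. -/
theorem stmt_17 (l u S0 Kstr : ℝ) (hlu : l < u)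
    (hS0l : l ≤ S0) (hS0u : S0 ≤ u) (hKl : l ≤ Kstr) (hKu : Kstr ≤ u)
    (ϱw ϱb : ℝ → ℝ)
    (hϱw : ∀ p0 : ℝ, ϱw p0 = sInf (Set.range fun ξ : ℝ =>
      sSup ((fun S1 : ℝ => max (S1 - Kstr) 0 - p0 - ξ * (S1 - S0)) '' Set.Icc l u)))
    (hϱb : ∀ p0 : ℝ, ϱb p0 = sInf (Set.range fun ξ : ℝ =>
      sSup ((fun S1 : ℝ => -(max (S1 - Kstr) 0) + p0 - ξ * (S1 - S0)) '' Set.Icc l u))) :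
    ϱw ((1 / 2) * (S0 - l) * (u - Kstr) / (u - l) + (1 / 2) * max (S0 - Kstr) 0)
      = ϱb ((1 / 2) * (S0 - l) * (u - Kstr) / (u - l) + (1 / 2) * max (S0 - Kstr) 0) ∧
    (∀ p0 : ℝ, ϱw p0 = ϱb p0 →
      p0 = (1 / 2) * (S0 - l) * (u - Kstr) / (u - l) + (1 / 2) * max (S0 - Kstr) 0) ∧
    ϱw ((1 / 2) * (S0 - l) * (u - Kstr) / (u - l) + (1 / 2) * max (S0 - Kstr) 0)
      = (1 / 2) * (S0 - l) * (u - Kstr) / (u - l) - (1 / 2) * max (S0 - Kstr) 0 := by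
  obtain rfl : ϱw = writerRisk (Set.Icc l u) S0 fun S => max (S - Kstr) 0 := funext hϱw
  obtain rfl : ϱb = buyerRisk (Set.Icc l u) S0 fun S => max (S - Kstr) 0 := funext hϱb
  obtain ⟨equal_iff, common_risk⟩ := stmt_17_general (f := fun S => max (S - Kstr) 0)
    ⟨hS0l, hS0u⟩ (convexOn_callPayoff Kstr (convex_Icc l u))
    (ContinuousOn.lowerSemicontinuousOn (by fun_prop))
  simp only [chord_callPayoff hKl hKu, ← mul_div_assoc, ← mul_assoc] at equal_iff common_risk
  exact ⟨(equal_iff _).2 rfl, fun p0 => (equal_iff p0).1, common_risk⟩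
end
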